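/- Let M be an (A,c)-duplex and let I be a ℤ/2ℤ-graded A-submodule of M that is both injective and projective as an A-module, such that the differential d of M is injective on I and I ∩ d(I) = 0. Then M is isomorphic in the stable category Mod̲₂(Ã_c) to its quotient by the subduplex generated by I, namely to the duplex ⋯ → M⁰/(I⁰ ⊕ d(I¹)) → M¹/(I¹ ⊕ d(I⁰)) → ⋯ with the induced differential. -/

import Mathlib

/-!
The subduplex generated by `I` is a direct summand of `M` and a projective duplex, so the
complementary summand is the quotient and the projection onto it is a stable isomorphism.

Twisting `d` by the parity involution gives an `A`-linear operator `D` with `D² = -c`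
(`Duplex.twist`); a degree-preserving `A`-linear map is a duplex morphism exactly when it
commutes with `D`. If an `A`-linear map merely commutes with `D`, its degree-zero part is a duplex
morphism (`degZero_isDuplexMorphism`). The hypotheses on `I` say that
`E : I × I → M`, `(x, y) ↦ x + D y`, is injective, and its image is the subduplex generated by `I`.

* Splitting: injectivity of `I` extends the second projection `I × I → I` along `E` to
  `γ : M → I`. The map `γ D + D γ` commutes with `D`, takes values in the image of `E`
  and is the identity there; so its degree-zero part is an idempotent duplex endomorphism `ρ`
  with the same image.
* Projectivity (`isProjectiveDuplex_of_bijective`): a duplex map out of the image of `E` is lifted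
  by lifting its restriction to `I` as an `A`-linear map `h`, extending by
  `x + D y ↦ h x + D (h y)`, and taking the degree-zero part.

The quotient is realised as the range of `1 - ρ`.
-/


/-!
STATEMENT 4: If M is an (A,c)-duplex and I a ℤ/2ℤ-graded A-submodule of M that is
both injective and projective as an A-module, with d injective on I and
I ∩ d(I) = 0, then M is isomorphic in the stable category Mod̲₂(Ã_c) to its
quotient by the subduplex generated by I.
-/

universe u v

structure Duplex (A : Type u) [Ring A] (𝒜 : ZMod 2 → AddSubgroup A) (c : A) where
  carrier : Type v
  [acg : AddCommGroup carrier]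
  [mod : Module A carrier]
  grading : ZMod 2 → AddSubgroup carrier
  decomp : DirectSum.IsInternal grading
  smul_mem : ∀ {i j : ZMod 2} {a : A} {m : carrier},
    a ∈ 𝒜 i → m ∈ grading j → a • m ∈ grading (i + j)
  d : carrier →+ carrier
  d_degree : ∀ (i : ZMod 2), ∀ m ∈ grading i, d m ∈ grading (i + 1)
  d_sq : ∀ m : carrier, d (d m) = c • m
  d_supercomm : ∀ (i : ZMod 2) (a : A), a ∈ 𝒜 i → ∀ m : carrier,
    d (a • m) = ((-1 : ℤ) ^ i.val) • (a • d m)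

attribute [instance] Duplex.acg Duplex.mod

variable {A : Type u} [Ring A] {𝒜 : ZMod 2 → AddSubgroup A} {c : A}

def IsDuplexMorphism (M N : Duplex A 𝒜 c) (f : M.carrier →ₗ[A] N.carrier) : Prop :=
  (∀ i : ZMod 2, ∀ m ∈ M.grading i, f m ∈ N.grading i) ∧ ∀ m, f (M.d m) = N.d (f m)

/-- A projective ℤ/2ℤ-graded `Ã_c`-module, i.e. a projective object of the category
of `(A,c)`-duplexes. -/
def IsProjectiveDuplex (P : Duplex.{u, v} A 𝒜 c) : Prop :=
  ∀ (X Y : Duplex.{u, v} A 𝒜 c)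
    (p : X.carrier →ₗ[A] Y.carrier) (f : P.carrier →ₗ[A] Y.carrier),
    IsDuplexMorphism X Y p → Function.Surjective p → IsDuplexMorphism P Y f →
    ∃ g : P.carrier →ₗ[A] X.carrier, IsDuplexMorphism P X g ∧ p ∘ₗ g = f

/-- A morphism of duplexes factors through a projective ℤ/2ℤ-graded `Ã_c`-module. -/
def FactorsThroughProjective (M N : Duplex.{u, v} A 𝒜 c)
    (f : M.carrier →ₗ[A] N.carrier) : Prop :=
  ∃ (P : Duplex.{u, v} A 𝒜 c) (q : M.carrier →ₗ[A] P.carrier)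
    (r : P.carrier →ₗ[A] N.carrier),
    IsProjectiveDuplex P ∧ IsDuplexMorphism M P q ∧ IsDuplexMorphism P N r ∧
    f = r ∘ₗ q

/-- Isomorphism in the stable category `Mod̲₂(Ã_c)` of ℤ/2ℤ-graded `Ã_c`-modules:
morphisms in both directions whose composites differ from the identities by maps
factoring through projectives. -/
def StablyIso (M N : Duplex.{u, v} A 𝒜 c) : Prop :=
  ∃ (f : M.carrier →ₗ[A] N.carrier) (g : N.carrier →ₗ[A] M.carrier),
    IsDuplexMorphism M N f ∧ IsDuplexMorphism N M g ∧
    FactorsThroughProjective M M (g ∘ₗ f - LinearMap.id) ∧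
    FactorsThroughProjective N N (f ∘ₗ g - LinearMap.id)

/-! ### Homogeneous components -/

/-- The homogeneous component of degree `i`. -/
noncomputable def Duplex.proj (M : Duplex.{u, v} A 𝒜 c) (i : ZMod 2) : M.carrier →+ M.carrier :=
  (M.grading i).subtype.comp ((DFinsupp.evalAddMonoidHom i).comp
    (AddEquiv.ofBijective (DirectSum.coeAddMonoidHom M.grading) M.decomp).symm.toAddMonoidHom)

theorem Duplex.proj_mem (M : Duplex.{u, v} A 𝒜 c) (i : ZMod 2) (m : M.carrier) :
    M.proj i m ∈ M.grading i :=
  SetLike.coe_mem _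

theorem Duplex.symm_of_mem (M : Duplex.{u, v} A 𝒜 c) {i : ZMod 2} {m : M.carrier}
    (hm : m ∈ M.grading i) :
    (AddEquiv.ofBijective (DirectSum.coeAddMonoidHom M.grading) M.decomp).symm m =
      DirectSum.of (fun j => M.grading j) i ⟨m, hm⟩ := by
  rw [AddEquiv.symm_apply_eq]
  exact (DirectSum.coeAddMonoidHom_of M.grading i ⟨m, hm⟩).symm

theorem Duplex.proj_of_mem (M : Duplex.{u, v} A 𝒜 c) {i : ZMod 2} {m : M.carrier}
    (hm : m ∈ M.grading i) : M.proj i m = m := by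
  have h : M.proj i m = (((AddEquiv.ofBijective (DirectSum.coeAddMonoidHom M.grading)
    M.decomp).symm m) i : M.carrier) := rfl
  rw [h, M.symm_of_mem hm, DirectSum.of_eq_same]

theorem Duplex.proj_of_mem_ne (M : Duplex.{u, v} A 𝒜 c) {i j : ZMod 2} {m : M.carrier}
    (hm : m ∈ M.grading i) (hij : i ≠ j) : M.proj j m = 0 := by
  have h : M.proj j m = (((AddEquiv.ofBijective (DirectSum.coeAddMonoidHom M.grading)
    M.decomp).symm m) j : M.carrier) := rfl
  rw [h, M.symm_of_mem hm, DirectSum.of_eq_of_ne _ _ _ hij.symm]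
  rfl

theorem zmod_two_cases (i : ZMod 2) : i = 0 ∨ i = 1 := by
  revert i; decide

theorem zmod_two_add_one_ne : ∀ k : ZMod 2, k + 1 ≠ k := by decide

theorem zmod_two_add_one_add_one : ∀ k : ZMod 2, k + 1 + 1 = k := by decide

theorem Duplex.proj_add_proj (M : Duplex.{u, v} A 𝒜 c) (m : M.carrier) :
    M.proj 0 m + M.proj 1 m = m := by
  obtain ⟨x, rfl⟩ := M.decomp.2 m
  induction x using DirectSum.induction_on with
  | zero => simp
  | of i y =>
    rw [DirectSum.coeAddMonoidHom_of]
    rcases zmod_two_cases i with rfl | rfl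
    · rw [M.proj_of_mem y.2, M.proj_of_mem_ne y.2 (by decide), add_zero]
    · rw [M.proj_of_mem y.2, M.proj_of_mem_ne y.2 (by decide), zero_add]
  | add x y hx hy =>
    simp only [map_add]
    rw [add_add_add_comm, hx, hy]

/-- Components are determined by any homogeneous decomposition. -/
theorem Duplex.proj_eq (M : Duplex.{u, v} A 𝒜 c) {k : ZMod 2} {x y : M.carrier}
    (hx : x ∈ M.grading k) (hy : y ∈ M.grading (k + 1)) : M.proj k (x + y) = x := by
  rw [map_add, M.proj_of_mem hx, M.proj_of_mem_ne hy (zmod_two_add_one_ne k), add_zero]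

theorem Duplex.proj_add_proj_succ (M : Duplex.{u, v} A 𝒜 c) (k : ZMod 2) (m : M.carrier) :
    M.proj k m + M.proj (k + 1) m = m := by
  rcases zmod_two_cases k with rfl | rfl
  · exact M.proj_add_proj m
  · rw [add_comm]; exact M.proj_add_proj m

theorem Duplex.proj_smul (M : Duplex.{u, v} A 𝒜 c) {j : ZMod 2} {a : A} (ha : a ∈ 𝒜 j)
    (i : ZMod 2) (m : M.carrier) : M.proj (j + i) (a • m) = a • M.proj i m := by
  conv_lhs => rw [← M.proj_add_proj_succ i m, smul_add]
  refine M.proj_eq (M.smul_mem ha (M.proj_mem _ _)) ?_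
  rw [add_assoc]
  exact M.smul_mem ha (M.proj_mem _ _)

theorem Duplex.proj_d (M : Duplex.{u, v} A 𝒜 c) (i : ZMod 2) (m : M.carrier) :
    M.proj (i + 1) (M.d m) = M.d (M.proj i m) := by
  conv_lhs => rw [← M.proj_add_proj_succ i m, map_add]
  exact M.proj_eq (M.d_degree _ _ (M.proj_mem _ _)) (M.d_degree _ _ (M.proj_mem _ _))

theorem IsDuplexMorphism.proj_comm {M N : Duplex.{u, v} A 𝒜 c} {f : M.carrier →ₗ[A] N.carrier}
    (hf : IsDuplexMorphism M N f) (i : ZMod 2) (m : M.carrier) :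
    N.proj i (f m) = f (M.proj i m) := by
  conv_lhs => rw [← M.proj_add_proj_succ i m, map_add]
  exact N.proj_eq (hf.1 _ _ (M.proj_mem _ _)) (hf.1 _ _ (M.proj_mem _ _))

/-- An additive map compatible with homogeneous scalars is linear. -/
def linearOfHomogeneous [GradedRing 𝒜] {M N : Type*} [AddCommGroup M] [Module A M]
    [AddCommGroup N] [Module A N] (f : M →+ N)
    (hf : ∀ (i : ZMod 2) (a : A), a ∈ 𝒜 i → ∀ m, f (a • m) = a • f m) : M →ₗ[A] N where
  toFun := f
  map_add' := f.map_add
  map_smul' a m := by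
    induction a using DirectSum.Decomposition.inductionOn 𝒜 with
    | zero => simp
    | homogeneous a => exact hf _ _ a.2 m
    | add a b ha hb => simp only [RingHom.id_apply] at *; rw [add_smul, map_add, ha, hb, add_smul]

/-! ### The parity involution and the twisted differential -/

/-- The parity involution `m ↦ (-1)^|m| m`. -/
noncomputable def Duplex.parity (M : Duplex.{u, v} A 𝒜 c) : M.carrier →+ M.carrier :=
  M.proj 0 - M.proj 1

theorem Duplex.parity_apply (M : Duplex.{u, v} A 𝒜 c) (m : M.carrier) :
    M.parity m = M.proj 0 m - M.proj 1 m := rfl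

theorem Duplex.parity_parity (M : Duplex.{u, v} A 𝒜 c) (m : M.carrier) :
    M.parity (M.parity m) = m := by
  have h0 := M.proj_mem 0 m
  have h1 := M.proj_mem 1 m
  simp only [M.parity_apply, map_sub]
  rw [M.proj_of_mem h0, M.proj_of_mem h1, M.proj_of_mem_ne h0 (by decide),
    M.proj_of_mem_ne h1 (by decide), zero_sub, sub_zero, sub_neg_eq_add, M.proj_add_proj]

theorem Duplex.parity_d (M : Duplex.{u, v} A 𝒜 c) (m : M.carrier) :
    M.parity (M.d m) = - M.d (M.parity m) := by
  have h0 := M.proj_d 0 m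
  have h1 := M.proj_d 1 m
  rw [show (0 : ZMod 2) + 1 = 1 by decide] at h0
  rw [show (1 : ZMod 2) + 1 = 0 by decide] at h1
  rw [M.parity_apply, M.parity_apply, h0, h1, map_sub, neg_sub]

theorem Duplex.d_parity_smul (M : Duplex.{u, v} A 𝒜 c) (i : ZMod 2) (a : A) (ha : a ∈ 𝒜 i)
    (m : M.carrier) : M.d (M.parity (a • m)) = a • M.d (M.parity m) := by
  have h0 := M.proj_smul ha 0 m
  have h1 := M.proj_smul ha 1 m
  rcases zmod_two_cases i with rfl | rfl
  · rw [show (0 : ZMod 2) + 0 = 0 by decide] at h0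
    rw [show (0 : ZMod 2) + 1 = 1 by decide] at h1
    rw [M.parity_apply, h0, h1, ← smul_sub, M.d_supercomm 0 a ha, M.parity_apply]
    simp
  · rw [show (1 : ZMod 2) + 0 = 1 by decide] at h0
    rw [show (1 : ZMod 2) + 1 = 0 by decide] at h1
    rw [M.parity_apply, h0, h1, ← smul_sub, M.d_supercomm 1 a ha, M.parity_apply]
    rw [show (1 : ZMod 2).val = 1 from rfl, ← neg_sub, map_neg, pow_one,
      neg_one_zsmul, smul_neg, neg_neg]

theorem IsDuplexMorphism.parity_comm {M N : Duplex.{u, v} A 𝒜 c}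
    {f : M.carrier →ₗ[A] N.carrier} (hf : IsDuplexMorphism M N f) (m : M.carrier) :
    N.parity (f m) = f (M.parity m) := by
  rw [N.parity_apply, hf.proj_comm, hf.proj_comm, ← map_sub, M.parity_apply]

section

variable [GradedRing 𝒜]

/-- The `A`-linear operator `D = d ∘ parity`, satisfying `D² = -c`. -/
noncomputable def Duplex.twist (M : Duplex.{u, v} A 𝒜 c) : M.carrier →ₗ[A] M.carrier :=
  linearOfHomogeneous (𝒜 := 𝒜) (M.d.comp M.parity) M.d_parity_smul

theorem Duplex.twist_apply (M : Duplex.{u, v} A 𝒜 c) (m : M.carrier) :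
    M.twist m = M.d (M.parity m) := rfl

theorem Duplex.d_eq_twist (M : Duplex.{u, v} A 𝒜 c) (m : M.carrier) :
    M.d m = M.twist (M.parity m) := by
  rw [M.twist_apply, M.parity_parity]

theorem Duplex.twist_twist (M : Duplex.{u, v} A 𝒜 c) (m : M.carrier) :
    M.twist (M.twist m) = -(c • m) := by
  rw [M.twist_apply, M.twist_apply, M.parity_d, M.parity_parity, map_neg, M.d_sq]

theorem Duplex.twist_mem (M : Duplex.{u, v} A 𝒜 c) {i : ZMod 2} {m : M.carrier}
    (hm : m ∈ M.grading i) : M.twist m ∈ M.grading (i + 1) := by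
  rw [M.twist_apply]
  apply M.d_degree
  rcases zmod_two_cases i with rfl | rfl
  · rw [M.parity_apply, M.proj_of_mem hm, M.proj_of_mem_ne hm (by decide), sub_zero]
    exact hm
  · rw [M.parity_apply, M.proj_of_mem hm, M.proj_of_mem_ne hm (by decide), zero_sub]
    exact neg_mem hm

theorem Duplex.proj_twist (M : Duplex.{u, v} A 𝒜 c) (i : ZMod 2) (m : M.carrier) :
    M.proj (i + 1) (M.twist m) = M.twist (M.proj i m) := by
  conv_lhs => rw [← M.proj_add_proj_succ i m, map_add]
  exact M.proj_eq (M.twist_mem (M.proj_mem _ _)) (M.twist_mem (M.proj_mem _ _))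

theorem IsDuplexMorphism.twist_comm {M N : Duplex.{u, v} A 𝒜 c}
    {f : M.carrier →ₗ[A] N.carrier} (hf : IsDuplexMorphism M N f) (m : M.carrier) :
    f (M.twist m) = N.twist (f m) := by
  rw [M.twist_apply, N.twist_apply, hf.2, hf.parity_comm]

/-! ### Degree-zero parts and projective duplexes -/

/-- The degree-preserving part of an `A`-linear map between duplexes. -/
noncomputable def degZero {M N : Duplex.{u, v} A 𝒜 c} (L : M.carrier →ₗ[A] N.carrier) :
    M.carrier →ₗ[A] N.carrier :=
  linearOfHomogeneous (𝒜 := 𝒜)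
    ((N.proj 0).comp (L.toAddMonoidHom.comp (M.proj 0)) +
      (N.proj 1).comp (L.toAddMonoidHom.comp (M.proj 1))) <| by
    intro i a ha m
    have h0 := M.proj_smul ha 0 m
    have h1 := M.proj_smul ha 1 m
    have k0 := fun n => N.proj_smul ha 0 n
    have k1 := fun n => N.proj_smul ha 1 n
    change N.proj 0 (L (M.proj 0 (a • m))) + N.proj 1 (L (M.proj 1 (a • m))) =
      a • (N.proj 0 (L (M.proj 0 m)) + N.proj 1 (L (M.proj 1 m)))
    rcases zmod_two_cases i with rfl | rfl
    · rw [show (0 : ZMod 2) + 0 = 0 by decide] at h0 k0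
      rw [show (0 : ZMod 2) + 1 = 1 by decide] at h1 k1
      rw [h0, h1, L.map_smul, L.map_smul, k0, k1, smul_add]
    · rw [show (1 : ZMod 2) + 0 = 1 by decide] at h0 k0
      rw [show (1 : ZMod 2) + 1 = 0 by decide] at h1 k1
      rw [h0, h1, L.map_smul, L.map_smul, k0, k1, smul_add, add_comm]

theorem degZero_apply {M N : Duplex.{u, v} A 𝒜 c} (L : M.carrier →ₗ[A] N.carrier)
    (m : M.carrier) :
    degZero L m = N.proj 0 (L (M.proj 0 m)) + N.proj 1 (L (M.proj 1 m)) := rfl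

theorem degZero_of_mem {M N : Duplex.{u, v} A 𝒜 c} (L : M.carrier →ₗ[A] N.carrier)
    {i : ZMod 2} {m : M.carrier} (hm : m ∈ M.grading i) : degZero L m = N.proj i (L m) := by
  rw [degZero_apply]
  rcases zmod_two_cases i with rfl | rfl
  · rw [M.proj_of_mem hm, M.proj_of_mem_ne hm (by decide), map_zero, map_zero, add_zero]
  · rw [M.proj_of_mem hm, M.proj_of_mem_ne hm (by decide), map_zero, map_zero, zero_add]

theorem degZero_isDuplexMorphism {M N : Duplex.{u, v} A 𝒜 c} (L : M.carrier →ₗ[A] N.carrier)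
    (hL : ∀ m, L (M.twist m) = N.twist (L m)) : IsDuplexMorphism M N (degZero L) := by
  have hdeg : ∀ i : ZMod 2, ∀ m ∈ M.grading i, degZero L m ∈ N.grading i := by
    intro i m hm
    rw [degZero_of_mem L hm]
    exact N.proj_mem _ _
  have hhom : ∀ i : ZMod 2, ∀ m ∈ M.grading i,
      degZero L (M.twist m) = N.twist (degZero L m) := by
    intro i m hm
    rw [degZero_of_mem L (M.twist_mem hm), degZero_of_mem L hm, hL, N.proj_twist]
  have htw : ∀ m, degZero L (M.twist m) = N.twist (degZero L m) := by
    intro m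
    rw [← M.proj_add_proj m]
    simp only [map_add]
    rw [hhom 0 _ (M.proj_mem _ _), hhom 1 _ (M.proj_mem _ _)]
  have hproj : ∀ i m, N.proj i (degZero L m) = degZero L (M.proj i m) := by
    intro i m
    conv_lhs => rw [← M.proj_add_proj_succ i m, map_add]
    exact N.proj_eq (hdeg _ _ (M.proj_mem _ _)) (hdeg _ _ (M.proj_mem _ _))
  refine ⟨hdeg, fun m => ?_⟩
  rw [M.d_eq_twist, N.d_eq_twist, htw, M.parity_apply, N.parity_apply, hproj, hproj, map_sub]

/-- A duplex freely generated over `D` by a projective `A`-module `K` is projective. -/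
theorem isProjectiveDuplex_of_bijective (P : Duplex.{u, v} A 𝒜 c) {K : Type*} [AddCommGroup K]
    [Module A K] [Module.Projective A K] (ι : K →ₗ[A] P.carrier)
    (hι : Function.Bijective (ι.coprod (P.twist ∘ₗ ι))) : IsProjectiveDuplex P := by
  intro X Y p f hp hps hf
  obtain ⟨h, hh⟩ := Module.projective_lifting_property p (f ∘ₗ ι) hps
  have hh' : ∀ x, p (h x) = f (ι x) := fun x => LinearMap.congr_fun hh x
  let e := LinearEquiv.ofBijective _ hι
  have he : ∀ x y, e (x, y) = ι x + P.twist (ι y) := fun x y => by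
    simp [e]
  let L : P.carrier →ₗ[A] X.carrier := (h.coprod (X.twist ∘ₗ h)) ∘ₗ e.symm.toLinearMap
  have hLe : ∀ x y, L (ι x + P.twist (ι y)) = h x + X.twist (h y) := fun x y => by
    rw [← he]; simp [L]
  have hsurj : ∀ m, ∃ x y, m = ι x + P.twist (ι y) := fun m =>
    ⟨(e.symm m).1, (e.symm m).2, by rw [← he]; simp⟩
  have hL : ∀ m, L (P.twist m) = X.twist (L m) := by
    intro m
    obtain ⟨x, y, rfl⟩ := hsurj m
    have h1 : P.twist (ι x + P.twist (ι y)) = ι (-(c • y)) + P.twist (ι x) := by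
      rw [map_add, P.twist_twist, map_neg, map_smul, add_comm]
    rw [h1, hLe, hLe, map_add, X.twist_twist, map_neg, map_smul, add_comm]
  have hpL : ∀ m, p (L m) = f m := by
    intro m
    obtain ⟨x, y, rfl⟩ := hsurj m
    rw [hLe, map_add, hp.twist_comm, hh', hh', map_add, hf.twist_comm]
  refine ⟨degZero L, degZero_isDuplexMorphism L hL, LinearMap.ext fun m => ?_⟩
  rw [LinearMap.comp_apply, degZero_apply, map_add, ← hp.proj_comm, ← hp.proj_comm, hpL, hpL,
    hf.proj_comm, hf.proj_comm, ← map_add, P.proj_of_mem (P.proj_mem _ _),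
    P.proj_of_mem (P.proj_mem _ _), P.proj_add_proj]

end

/-! ### Splitting off direct summands -/

/-- The duplex structure on the range of a duplex endomorphism,
with grading and differential restricted from `M`. -/
noncomputable def Duplex.range (M : Duplex.{u, v} A 𝒜 c) (e : M.carrier →ₗ[A] M.carrier)
    (he : IsDuplexMorphism M M e) : Duplex.{u, v} A 𝒜 c where
  carrier := LinearMap.range e
  grading i := (M.grading i).comap (LinearMap.range e).subtype.toAddMonoidHom
  decomp := by
    constructor
    · intro x y hxy
      have key : ∀ (z : DirectSum (ZMod 2) fun i =>
          (M.grading i).comap (LinearMap.range e).subtype.toAddMonoidHom) (i : ZMod 2),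
          M.proj i ((DirectSum.coeAddMonoidHom _ z : LinearMap.range e) : M.carrier) =
            ((z i : LinearMap.range e) : M.carrier) := by
        intro z i
        induction z using DirectSum.induction_on with
        | zero => simp
        | of j y =>
          rw [DirectSum.coeAddMonoidHom_of]
          by_cases hij : j = i
          · subst hij
            rw [DirectSum.of_eq_same]
            exact M.proj_of_mem y.2
          · rw [DirectSum.of_eq_of_ne _ _ _ (Ne.symm hij)]
            exact M.proj_of_mem_ne y.2 hij
        | add a b ha hb =>
          rw [map_add, Submodule.coe_add, map_add, ha, hb]
          rfl
      refine DFinsupp.ext fun i => Subtype.ext (Subtype.ext ?_)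
      rw [← key x i, ← key y i, hxy]
    · rintro ⟨m, n, rfl⟩
      refine ⟨DirectSum.of _ 0 ⟨⟨e (M.proj 0 n), _, rfl⟩, he.1 0 _ (M.proj_mem 0 n)⟩ +
        DirectSum.of _ 1 ⟨⟨e (M.proj 1 n), _, rfl⟩, he.1 1 _ (M.proj_mem 1 n)⟩, ?_⟩
      rw [map_add, DirectSum.coeAddMonoidHom_of, DirectSum.coeAddMonoidHom_of]
      refine Subtype.ext ?_
      change e (M.proj 0 n) + e (M.proj 1 n) = e n
      rw [← map_add, M.proj_add_proj]
  smul_mem ha hm := M.smul_mem ha hm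
  d := (M.d.comp (LinearMap.range e).subtype.toAddMonoidHom).codRestrict (LinearMap.range e) <| by
    rintro ⟨_, n, rfl⟩
    exact ⟨M.d n, he.2 n⟩
  d_degree i m hm := M.d_degree i _ hm
  d_sq m := Subtype.ext (M.d_sq _)
  d_supercomm i a ha m := Subtype.ext (M.d_supercomm i a ha _)

theorem Duplex.range_subtype_isDuplexMorphism (M : Duplex.{u, v} A 𝒜 c)
    (e : M.carrier →ₗ[A] M.carrier) (he : IsDuplexMorphism M M e) :
    IsDuplexMorphism (M.range e he) M (LinearMap.range e).subtype :=
  ⟨fun _ _ hm => hm, fun _ => rfl⟩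

theorem Duplex.rangeRestrict_isDuplexMorphism (M : Duplex.{u, v} A 𝒜 c)
    (e : M.carrier →ₗ[A] M.carrier) (he : IsDuplexMorphism M M e) :
    IsDuplexMorphism M (M.range e he) e.rangeRestrict :=
  ⟨fun i m hm => he.1 i m hm, fun m => Subtype.ext (he.2 m)⟩

/-- Let `M` be an `(A,c)`-duplex and `I` a ℤ/2ℤ-graded
`A`-submodule of `M` that is both injective and projective as an `A`-module, such
that `d` is injective on `I` and `I ∩ d(I) = 0`.  Then `M` is isomorphic in the
stable category `Mod̲₂(Ã_c)` to its quotient by the subduplex generated by `I`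
(namely `M⁰/(I⁰ ⊕ d(I¹)) → M¹/(I¹ ⊕ d(I⁰))`, with the induced differential). -/
theorem stablyIso_quot_by_proj_injective
    [GradedRing 𝒜] (hc : c ∈ 𝒜 0) (hc_central : ∀ a : A, c * a = a * c)
    (M : Duplex.{u, v} A 𝒜 c) (I : Submodule A M.carrier)
    (hgr : ∀ x ∈ I, ∃ x0 ∈ I, ∃ x1 ∈ I,
      x0 ∈ M.grading 0 ∧ x1 ∈ M.grading 1 ∧ x = x0 + x1)
    (hinj : Module.Injective A I)
    (hproj : Module.Projective A I)
    (hdinj : ∀ x ∈ I, M.d x = 0 → x = 0)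
    (hd : ∀ x ∈ I, ∀ y ∈ I, x = M.d y → x = 0) :
    ∃ (Q : Duplex.{u, v} A 𝒜 c) (π : M.carrier →ₗ[A] Q.carrier),
      IsDuplexMorphism M Q π ∧
      Function.Surjective π ∧
      (∀ m : M.carrier, π m = 0 ↔ ∃ x ∈ I, ∃ y ∈ I, m = x + M.d y) ∧
      (∀ k : ZMod 2, ∀ q ∈ Q.grading k, ∃ m ∈ M.grading k, π m = q) ∧
      StablyIso M Q := by
  let D := M.twist
  -- `I` is stable under homogeneous components and under the parity involution.
  have hIproj : ∀ (i : ZMod 2), ∀ x ∈ I, M.proj i x ∈ I := by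
    intro i x hx
    obtain ⟨x0, hx0, x1, hx1, h0, h1, rfl⟩ := hgr x hx
    rcases zmod_two_cases i with rfl | rfl
    · rw [M.proj_eq h0 h1]; exact hx0
    · rw [add_comm x0 x1, M.proj_eq h1 h0]; exact hx1
  have hIpar : ∀ x ∈ I, M.parity x ∈ I := fun x hx =>
    I.sub_mem (hIproj 0 x hx) (hIproj 1 x hx)
  let E : (I × I) →ₗ[A] M.carrier := I.subtype.coprod (D ∘ₗ I.subtype)
  have hE : ∀ x y : I, E (x, y) = x + D y := fun x y => by simp [E]
  have hEinj : Function.Injective E := by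
    refine (injective_iff_map_eq_zero E).2 ?_
    rintro ⟨x, y⟩ h
    rw [hE] at h
    have h1 : (-x : M.carrier) = M.d (M.parity y) := neg_eq_of_add_eq_zero_right h
    have hx : (-x : M.carrier) = 0 := hd _ (I.neg_mem x.2) _ (hIpar _ y.2) h1
    have hy : M.parity (y : M.carrier) = 0 := hdinj _ (hIpar _ y.2) (by rw [← h1, hx])
    have hy' : (y : M.carrier) = 0 := by rw [← M.parity_parity y, hy, map_zero]
    rw [neg_eq_zero] at hx
    exact Prod.ext (Subtype.ext hx) (Subtype.ext hy')
  obtain ⟨γ, hγ⟩ := hinj.out E hEinj (LinearMap.snd A I I)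
  let L : M.carrier →ₗ[A] M.carrier :=
    I.subtype ∘ₗ γ ∘ₗ D + D ∘ₗ I.subtype ∘ₗ γ
  have hLa : ∀ m, L m = (γ (D m) : M.carrier) + D (γ m) := fun m => rfl
  have hLD : ∀ m, L (D m) = D (L m) := by
    intro m
    have h2 : D (D m) = -(c • m) := M.twist_twist m
    have h3 : D (D (γ m)) = -(c • (γ m : M.carrier)) := M.twist_twist _
    rw [hLa, hLa, map_add, h2, h3, map_neg, map_smul, Submodule.coe_neg, Submodule.coe_smul,
      add_comm]
  have hLI : ∀ x : I, L x = x := by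
    intro x
    have h1 := hγ (x, 0)
    have h2 := hγ (0, x)
    rw [hE] at h1 h2
    simp only [Submodule.coe_zero, map_zero, add_zero, zero_add, LinearMap.snd_apply] at h1 h2
    rw [hLa, h1, h2, Submodule.coe_zero, map_zero, add_zero]
  have hLE : ∀ z, L (E z) = E z := by
    rintro ⟨x, y⟩
    rw [hE, map_add, hLD, hLI, hLI]
  -- The image of `E` is a graded submodule.
  have hEproj : ∀ (i : ZMod 2) z, M.proj i (E z) ∈ LinearMap.range E := by
    rintro i ⟨x, y⟩
    refine ⟨(⟨_, hIproj i x x.2⟩, ⟨_, hIproj (i + 1) y y.2⟩), ?_⟩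
    have h1 : M.proj (i + 1 + 1) (D y) = D (M.proj (i + 1) y) := M.proj_twist (i + 1) y
    rw [zmod_two_add_one_add_one] at h1
    rw [hE, hE, map_add, h1]
  let ρ : M.carrier →ₗ[A] M.carrier := degZero L
  have hρ : IsDuplexMorphism M M ρ := degZero_isDuplexMorphism L hLD
  have hρmem : ∀ m, ρ m ∈ LinearMap.range E := fun m =>
    add_mem (hEproj 0 (γ (D (M.proj 0 m)), γ (M.proj 0 m)))
      (hEproj 1 (γ (D (M.proj 1 m)), γ (M.proj 1 m)))
  have hρE : ∀ z, ρ (E z) = E z := by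
    intro z
    obtain ⟨z0, h0⟩ := hEproj 0 z
    obtain ⟨z1, h1⟩ := hEproj 1 z
    change degZero L (E z) = E z
    rw [degZero_apply, ← h0, ← h1, hLE, hLE, h0, h1, M.proj_of_mem (M.proj_mem _ _),
      M.proj_of_mem (M.proj_mem _ _), M.proj_add_proj]
  have hρρ : ∀ m, ρ (ρ m) = ρ m := by
    intro m
    obtain ⟨z, hz⟩ := hρmem m
    rw [← hz, hρE]
  let e : M.carrier →ₗ[A] M.carrier := LinearMap.id - ρ
  have hea : ∀ m, e m = m - ρ m := fun m => rfl
  have he : IsDuplexMorphism M M e := by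
    refine ⟨fun i m hm => sub_mem hm (hρ.1 i m hm), fun m => ?_⟩
    rw [hea, hea, hρ.2, map_sub]
  have hee : ∀ m, e (e m) = e m := by
    intro m
    rw [hea (e m), hea, map_sub, hρρ, sub_self, sub_zero]
  let P := M.range ρ hρ
  let incl : P.carrier →ₗ[A] M.carrier := (LinearMap.range ρ).subtype
  have hincl : IsDuplexMorphism P M incl := M.range_subtype_isDuplexMorphism ρ hρ
  have hP : IsProjectiveDuplex P := by
    let ι : I →ₗ[A] P.carrier := I.subtype.codRestrict (LinearMap.range ρ) fun x =>
      ⟨E (x, 0), by rw [hρE, hE]; simp⟩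
    have hval : ∀ z, incl (ι.coprod (P.twist ∘ₗ ι) z) = E z := by
      rintro ⟨x, y⟩
      rw [LinearMap.coprod_apply, map_add, LinearMap.comp_apply, hincl.twist_comm, hE]
      rfl
    refine isProjectiveDuplex_of_bijective P ι ⟨fun z w hzw => hEinj ?_, ?_⟩
    · rw [← hval, ← hval, hzw]
    · rintro ⟨_, n, rfl⟩
      obtain ⟨z, hz⟩ := hρmem n
      exact ⟨z, Subtype.ext ((hval z).trans hz)⟩
  have hπ := M.rangeRestrict_isDuplexMorphism e he
  refine ⟨M.range e he, e.rangeRestrict, hπ, LinearMap.surjective_rangeRestrict e, ?_, ?_, ?_⟩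
  · intro m
    have h0 : e.rangeRestrict m = 0 ↔ m = ρ m := by
      rw [← sub_eq_zero (a := m), ← hea]
      exact Subtype.ext_iff
    refine h0.trans ⟨fun h => ?_, ?_⟩
    · obtain ⟨⟨x, y⟩, hz⟩ := hρmem m
      exact ⟨x, x.2, M.parity y, hIpar _ y.2, by rw [h, ← hz, hE]; rfl⟩
    · rintro ⟨x, hx, y, hy, rfl⟩
      have h1 : x + M.d y = E (⟨x, hx⟩, ⟨_, hIpar y hy⟩) := by
        rw [hE, M.d_eq_twist]
      rw [h1, hρE]
  · rintro k ⟨_, n, rfl⟩ hq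
    exact ⟨e n, hq, Subtype.ext (hee n)⟩
  · refine ⟨e.rangeRestrict, (LinearMap.range e).subtype, hπ,
      M.range_subtype_isDuplexMorphism e he, ?_, ?_⟩
    · refine ⟨P, ρ.rangeRestrict, -incl, hP,
        M.rangeRestrict_isDuplexMorphism ρ hρ, ⟨fun i m hm => neg_mem hm, fun m => ?_⟩, ?_⟩
      · exact (map_neg M.d _).symm
      · refine LinearMap.ext fun m => ?_
        change e m - m = -ρ m
        rw [hea]; abel
    · refine ⟨P, 0, 0, hP, ⟨fun i m _ => zero_mem _, fun m => ?_⟩,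
        ⟨fun i m _ => zero_mem _, fun m => ?_⟩, ?_⟩
      · exact (map_zero P.d).symm
      · exact (map_zero (M.range e he).d).symm
      · refine LinearMap.ext ?_
        rintro ⟨_, n, rfl⟩
        refine Subtype.ext ?_
        change e (e n) - e n = 0
        rw [hee, sub_self]
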